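/- arXiv:2008.10020 — 2 statements merged into one kernel-verified Lean document; each statement's English description precedes it below -/
import Mathlib

section
/- Let K be a kernel on ℝ^N, let π be a bounded probability density on ℝ^N, let C : ℝ^N → ℝ be differentiable with ∇C bounded, and let α ∈ ℝ^N be a point at which π and ∇C are continuous and π(α) > 0. For μ > 0 define the posterior density q_μ(θ) = π(θ) μ^{−N} K((θ − α)/μ) / ∫_{ℝ^N} π(s) μ^{−N} K((s − α)/μ) ds, which is well defined for all sufficiently small μ because the denominator converges to π(α) > 0. Then lim_{μ → 0⁺} ∫_{ℝ^N} ∇C(θ) q_μ(θ) dθ = ∇C(α). Consequently, as μ ↓ 0 the posterior-averaged drift of the multi-kernel passive stochastic gradient algorithm converges to −∇C(α), independently of the sampling density π. -/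
/-!
The rescaled kernels `μ⁻ᴺ K((· - α)/μ)` form an approximate identity at `α`: the substitution
`s = α + μ t` turns `∫ μ⁻ᴺ K((s - α)/μ) g(s) ds` into `∫ K(t) g(α + μ t) dt`, and dominated
convergence (with bound `B |K|` if `‖g‖ ≤ B`) gives the limit `g(α)` for every bounded measurable
`g` continuous at `α`. This is `tendsto_integral_rescaled_kernel_smul`. Applied to `g = π` it
gives the limit of the normalizing constant, applied to `g = π • ∇C` it gives the limit
`π(α) ∇C(α)` of the unnormalized drift, and the quotient of the two tends to `∇C(α)`.
-/

open MeasureTheory Filter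
open scoped Gradient

/-- Rescalings of an integrable function of total mass one, centred at `α`, form an approximate
identity at `α`. -/
theorem tendsto_integral_rescaled_kernel_smul {N : ℕ}
    {F : Type*} [NormedAddCommGroup F] [NormedSpace ℝ F] [CompleteSpace F]
    {K : EuclideanSpace ℝ (Fin N) → ℝ} (hK_int : Integrable K) (hK_one : (∫ θ, K θ) = 1)
    {g : EuclideanSpace ℝ (Fin N) → F} (hg : StronglyMeasurable g)
    {B : ℝ} (hB : ∀ θ, ‖g θ‖ ≤ B) {α : EuclideanSpace ℝ (Fin N)} (hα : ContinuousAt g α) :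
    Tendsto (fun μ : ℝ => ∫ s, ((μ ^ N)⁻¹ * K (μ⁻¹ • (s - α))) • g s)
      (nhdsWithin 0 (Set.Ioi 0)) (nhds (g α)) := by
  have key : Tendsto (fun μ : ℝ => ∫ t, K t • g (α + μ • t))
      (nhdsWithin 0 (Set.Ioi 0)) (nhds (∫ t, K t • g α)) := by
    refine tendsto_integral_filter_of_dominated_convergence (fun t => ‖K t‖ * B) ?_ ?_ ?_ ?_
    · refine Eventually.of_forall fun μ => ?_
      exact hK_int.aestronglyMeasurable.smul
        (hg.comp_measurable (by fun_prop)).aestronglyMeasurable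
    · refine Eventually.of_forall fun μ => Eventually.of_forall fun t => ?_
      rw [norm_smul]
      exact mul_le_mul_of_nonneg_left (hB _) (norm_nonneg _)
    · exact hK_int.norm.mul_const B
    · refine Eventually.of_forall fun t => ?_
      have h0 : Tendsto (fun μ : ℝ => α + μ • t) (nhdsWithin 0 (Set.Ioi 0)) (nhds α) := by
        have hc : Continuous fun μ : ℝ => α + μ • t := by fun_prop
        simpa using (hc.tendsto 0).mono_left nhdsWithin_le_nhds
      exact (hα.tendsto.comp h0).const_smul (K t)
  rw [integral_smul_const, hK_one, one_smul] at key
  refine key.congr' ?_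
  filter_upwards [self_mem_nhdsWithin] with μ hμ
  have hμ : 0 < μ := hμ
  have h1 := Measure.integral_comp_inv_smul_of_nonneg
    (volume : Measure (EuclideanSpace ℝ (Fin N))) (fun t => K t • g (α + μ • t)) hμ.le
  rw [finrank_euclideanSpace_fin] at h1
  rw [← integral_sub_right_eq_self _ α] at h1
  simp only [smul_inv_smul₀ hμ.ne', add_sub_cancel] at h1
  simp only [mul_smul, integral_smul]
  rw [h1, inv_smul_smul₀ (pow_pos hμ N).ne']

/-- **Small-kernel limit of the multi-kernel (posterior-averaged) passive drift.** With a
kernel `K`, a bounded probability density `π`, and `C` differentiable with bounded gradient,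
at a point `α` where `π` and `∇C` are continuous and `π(α) > 0`, the normalizing constant
`Z_μ = ∫ π(s) μ⁻ᴺ K((s − α)/μ) ds` converges to `π(α) > 0` (so the posterior `q_μ` is
eventually well defined) and the posterior-averaged gradient `∫ ∇C(θ) q_μ(θ) dθ` converges
to `∇C(α)` as `μ → 0⁺`, independently of the sampling density `π`. -/
theorem multikernel_posterior_drift_limit
    (N : ℕ) (K : EuclideanSpace ℝ (Fin N) → ℝ)
    (hK_meas : Measurable K) (hK_nonneg : ∀ θ, 0 ≤ K θ)
    (hK_symm : ∀ θ, K (-θ) = K θ) (hK_int : Integrable K) (hK_one : (∫ θ, K θ) = 1)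
    (π : EuclideanSpace ℝ (Fin N) → ℝ)
    (hπ_meas : Measurable π) (hπ_nonneg : ∀ θ, 0 ≤ π θ) (hπ_one : (∫ θ, π θ) = 1)
    (Bπ : ℝ) (hπ_bdd : ∀ θ, π θ ≤ Bπ)
    (C : EuclideanSpace ℝ (Fin N) → ℝ) (hC : Differentiable ℝ C)
    (BC : ℝ) (hgrad_bdd : ∀ θ, ‖∇ C θ‖ ≤ BC)
    (α : EuclideanSpace ℝ (Fin N))
    (hπ_cont : ContinuousAt π α) (hgrad_cont : ContinuousAt (∇ C) α)
    (hπ_pos : 0 < π α) :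
    Tendsto (fun μ : ℝ => ∫ s, π s * ((μ ^ N)⁻¹ * K (μ⁻¹ • (s - α))))
      (nhdsWithin 0 (Set.Ioi 0)) (nhds (π α)) ∧
    (∀ᶠ μ in nhdsWithin (0:ℝ) (Set.Ioi 0),
      0 < ∫ s, π s * ((μ ^ N)⁻¹ * K (μ⁻¹ • (s - α)))) ∧
    Tendsto (fun μ : ℝ =>
        ∫ θ, (π θ * ((μ ^ N)⁻¹ * K (μ⁻¹ • (θ - α))) /
              (∫ s, π s * ((μ ^ N)⁻¹ * K (μ⁻¹ • (s - α))))) • ∇ C θ)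
      (nhdsWithin 0 (Set.Ioi 0)) (nhds (∇ C α)) := by
  have hπ_norm : ∀ θ, ‖π θ‖ ≤ Bπ := fun θ => by
    rw [Real.norm_of_nonneg (hπ_nonneg θ)]; exact hπ_bdd θ
  have hgrad_meas : StronglyMeasurable (∇ C) := by
    have h : Measurable (∇ C) :=
      (InnerProductSpace.toDual ℝ (EuclideanSpace ℝ (Fin N))).symm.continuous.measurable.comp
        (measurable_fderiv ℝ C)
    exact h.stronglyMeasurable
  have hZ : Tendsto (fun μ : ℝ => ∫ s, π s * ((μ ^ N)⁻¹ * K (μ⁻¹ • (s - α))))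
      (nhdsWithin 0 (Set.Ioi 0)) (nhds (π α)) := by
    simpa only [smul_eq_mul, mul_comm (π _)] using
      tendsto_integral_rescaled_kernel_smul hK_int hK_one hπ_meas.stronglyMeasurable hπ_norm hπ_cont
  have hD := tendsto_integral_rescaled_kernel_smul hK_int hK_one (g := fun θ => π θ • ∇ C θ)
    (hπ_meas.stronglyMeasurable.smul hgrad_meas) (B := Bπ * BC)
    (fun θ => by
      rw [norm_smul]
      exact mul_le_mul (hπ_norm θ) (hgrad_bdd θ) (norm_nonneg _)
        ((norm_nonneg _).trans (hπ_norm θ)))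
    (hπ_cont.smul hgrad_cont)
  refine ⟨hZ, hZ.eventually_const_lt hπ_pos, ?_⟩
  have h := (hZ.inv₀ hπ_pos.ne').smul hD
  rw [inv_smul_smul₀ hπ_pos.ne'] at h
  refine h.congr fun μ => ?_
  rw [← integral_smul]
  refine integral_congr_ae (Eventually.of_forall fun θ => ?_)
  simp only [smul_smul]
  congr 1
  rw [div_eq_mul_inv]
  ring
end

section
/- Let K be a kernel on ℝ^N, let p_w be a bounded probability density on ℝ^N that is continuous at 0, let C : ℝ^N → ℝ be differentiable with ∇C bounded, and let α ∈ ℝ^N be a point at which ∇C is continuous. Then lim_{μ → 0⁺} ∫_{ℝ^N} μ^{−N} K((θ − α)/μ) ∇C(θ) p_w(θ − α) dθ = p_w(0) ∇C(α). Consequently, for the mis-specified passive stochastic gradient algorithm — where the gradient is evaluated at the stochastically perturbed point θ = α + w with perturbation density p_w — the limit drift as the kernel step size μ ↓ 0 is −p_w(0) ∇C(α), a time-rescaled version of the gradient flow −∇C(α). -/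
/-!
The substitution `θ = α + μ u` turns the smoothed drift into
`∫ K(u) p_w(μ u) ∇C(α + μ u) du`. As `μ → 0⁺` the integrand converges pointwise to
`K(u) p_w(0) ∇C(α)` by continuity of `p_w` at `0` and of `∇C` at `α`, and it is dominated by
`K(u) · B_w · B_C`, which is integrable; dominated convergence and `∫ K = 1` give the limit.
-/

open MeasureTheory Filter
open scoped Gradient

theorem measurable_gradient_aux {N : ℕ} (C : EuclideanSpace ℝ (Fin N) → ℝ) :
    Measurable (∇ C) := by
  unfold gradient
  exact (InnerProductSpace.toDual ℝ (EuclideanSpace ℝ (Fin N))).symm.continuous.measurable.comp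
    (measurable_fderiv ℝ C)

theorem integral_rescale_aux {N : ℕ} (K pw : EuclideanSpace ℝ (Fin N) → ℝ)
    (g : EuclideanSpace ℝ (Fin N) → EuclideanSpace ℝ (Fin N)) (α : EuclideanSpace ℝ (Fin N))
    {μ : ℝ} (hμ : 0 < μ) :
    ∫ θ, ((μ ^ N)⁻¹ * K (μ⁻¹ • (θ - α)) * pw (θ - α)) • g θ
      = ∫ u, (K u * pw (μ • u)) • g (μ • u + α) := by
  have h := Measure.integral_comp_smul volume
    (fun θ => (K (μ⁻¹ • θ) * pw θ) • g (θ + α)) μ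
  simp only [inv_smul_smul₀ hμ.ne', finrank_euclideanSpace, Fintype.card_fin] at h
  rw [h, abs_of_pos (by positivity), ← integral_smul,
    ← integral_add_right_eq_self _ α]
  simp only [add_sub_cancel_right, smul_smul, mul_assoc]

/-- **Limit drift of the mis-specified passive gradient algorithm.** For a kernel `K`, a
bounded perturbation density `p_w` continuous at `0`, and `C` differentiable with bounded
gradient continuous at `α`, `∫ μ⁻ᴺ K((θ − α)/μ) ∇C(θ) p_w(θ − α) dθ → p_w(0) ∇C(α)` as
`μ → 0⁺`; hence the limit drift of the mis-specified passive algorithm is `−p_w(0) ∇C(α)`. -/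
theorem misspecified_passive_drift_limit
    (N : ℕ) (K : EuclideanSpace ℝ (Fin N) → ℝ)
    (hK_meas : Measurable K) (hK_nonneg : ∀ θ, 0 ≤ K θ)
    (hK_symm : ∀ θ, K (-θ) = K θ) (hK_int : Integrable K) (hK_one : (∫ θ, K θ) = 1)
    (pw : EuclideanSpace ℝ (Fin N) → ℝ)
    (hpw_meas : Measurable pw) (hpw_nonneg : ∀ θ, 0 ≤ pw θ) (hpw_one : (∫ θ, pw θ) = 1)
    (Bw : ℝ) (hpw_bdd : ∀ θ, pw θ ≤ Bw) (hpw_cont : ContinuousAt pw 0)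
    (C : EuclideanSpace ℝ (Fin N) → ℝ) (hC : Differentiable ℝ C)
    (BC : ℝ) (hgrad_bdd : ∀ θ, ‖∇ C θ‖ ≤ BC)
    (α : EuclideanSpace ℝ (Fin N)) (hgrad_cont : ContinuousAt (∇ C) α) :
    Tendsto (fun μ : ℝ => ∫ θ, ((μ ^ N)⁻¹ * K (μ⁻¹ • (θ - α)) * pw (θ - α)) • ∇ C θ)
      (nhdsWithin 0 (Set.Ioi 0)) (nhds (pw 0 • ∇ C α)) ∧
    Tendsto (fun μ : ℝ => -∫ θ, ((μ ^ N)⁻¹ * K (μ⁻¹ • (θ - α)) * pw (θ - α)) • ∇ C θ)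
      (nhdsWithin 0 (Set.Ioi 0)) (nhds (-(pw 0 • ∇ C α))) := by
  have main : Tendsto
      (fun μ : ℝ => ∫ θ, ((μ ^ N)⁻¹ * K (μ⁻¹ • (θ - α)) * pw (θ - α)) • ∇ C θ)
      (nhdsWithin 0 (Set.Ioi 0)) (nhds (pw 0 • ∇ C α)) := by
    have hlim : pw 0 • ∇ C α = ∫ u, (K u * pw 0) • ∇ C α := by
      rw [integral_smul_const, integral_mul_const, hK_one, one_mul]
    rw [hlim]
    refine Tendsto.congr' (f₁ := fun μ : ℝ => ∫ u, (K u * pw (μ • u)) • ∇ C (μ • u + α)) ?_ ?_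
    · filter_upwards [self_mem_nhdsWithin] with μ hμ
      exact (integral_rescale_aux K pw (∇ C) α hμ).symm
    · refine tendsto_integral_filter_of_dominated_convergence (fun u => K u * Bw * BC)
        ?_ ?_ ((hK_int.mul_const Bw).mul_const BC) ?_
      · refine Eventually.of_forall fun μ => Measurable.aestronglyMeasurable ?_
        have hg := measurable_gradient_aux C
        fun_prop
      · refine Eventually.of_forall fun μ => Eventually.of_forall fun u => ?_
        rw [norm_smul, Real.norm_of_nonneg (mul_nonneg (hK_nonneg u) (hpw_nonneg _))]
        have hBw : 0 ≤ Bw := (hpw_nonneg 0).trans (hpw_bdd 0)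
        have hK := hK_nonneg u
        exact mul_le_mul (mul_le_mul_of_nonneg_left (hpw_bdd _) hK) (hgrad_bdd _)
          (norm_nonneg _) (mul_nonneg hK hBw)
      · refine Eventually.of_forall fun u => ?_
        have h0 : Tendsto (fun μ : ℝ => μ • u) (nhdsWithin 0 (Set.Ioi 0)) (nhds 0) := by
          have : Continuous fun μ : ℝ => μ • u := by fun_prop
          simpa using (this.tendsto 0).mono_left nhdsWithin_le_nhds
        have hα : Tendsto (fun μ : ℝ => μ • u + α) (nhdsWithin 0 (Set.Ioi 0)) (nhds α) := by
          simpa using h0.add_const α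
        exact ((hpw_cont.tendsto.comp h0).const_mul (K u)).smul (hgrad_cont.tendsto.comp hα)
  exact ⟨main, main.neg⟩
end
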